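/- arXiv:1810.06440 — 3 statements merged into one kernel-verified Lean document; each statement's English description precedes it below -/
import Mathlib

section
/- Let p > 1/2. For sequences f, g : ℤ → ℂ with ‖f‖_p < ∞ and ‖g‖_p < ∞, the convolution f⋆g defined by (f⋆g)_j := ∑_{i∈ℤ} f_i g_{j−i} is well defined (all series converge absolutely) and satisfies ‖f⋆g‖_p ≤ √(4 + 2(2p+1)/(2p−1)) · ‖f‖_p · ‖g‖_p. -/
open scoped BigOperators

/-- `⌈j⌉ := max(|j|,2)` as a real number. -/
noncomputable def jml (j : ℤ) : ℝ := max (|(j : ℝ)|) 2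

theorem jml_two_le (j : ℤ) : 2 ≤ jml j := le_max_right _ _

theorem jml_pos (j : ℤ) : 0 < jml j := lt_of_lt_of_le two_pos (jml_two_le j)

theorem jml_subadd (i j : ℤ) : jml j ≤ jml i + jml (j - i) := by
  have h1 := jml_two_le i
  have h2 := jml_two_le (j - i)
  have h3 : |(i : ℝ)| ≤ jml i := le_max_left _ _
  have h4 : |((j - i : ℤ) : ℝ)| ≤ jml (j - i) := le_max_left _ _
  have h5 : |(j : ℝ)| ≤ |(i : ℝ)| + |((j - i : ℤ) : ℝ)| := by
    have := abs_add_le (i : ℝ) ((j - i : ℤ) : ℝ)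
    push_cast at this ⊢
    simpa using this
  exact max_le (by linarith) (by linarith)

/-- Convexity bound. -/
theorem jml_rpow_le (s : ℝ) (hs : 1 < s) (i j : ℤ) :
    jml j ^ s ≤ 2 ^ (s - 1) * (jml i ^ s + jml (j - i) ^ s) := by
  refine (Real.rpow_le_rpow (jml_pos j).le (jml_subadd i j) (by linarith)).trans ?_
  exact_mod_cast NNReal.rpow_add_le_mul_rpow_add_rpow ⟨jml i, (jml_pos i).le⟩
    ⟨jml (j - i), (jml_pos _).le⟩ hs.le

theorem kernel_le (s : ℝ) (hs : 1 < s) (i j : ℤ) :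
    (jml i ^ s * jml (j - i) ^ s)⁻¹ ≤
      (jml j ^ s)⁻¹ * (2 ^ (s - 1) * ((jml i ^ s)⁻¹ + (jml (j - i) ^ s)⁻¹)) := by
  have h := jml_rpow_le s hs i j
  have h1 := Real.rpow_pos_of_pos (jml_pos i) s
  have h2 := Real.rpow_pos_of_pos (jml_pos j) s
  have h3 := Real.rpow_pos_of_pos (jml_pos (j - i)) s
  generalize jml i ^ s = a at *
  generalize jml j ^ s = b at *
  generalize jml (j - i) ^ s = c at *
  have e : b⁻¹ * (2 ^ (s - 1) * (a⁻¹ + c⁻¹)) = (a * c)⁻¹ * (b⁻¹ * (2 ^ (s - 1) * (a + c))) := by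
    field_simp
    ring
  rw [e]
  refine le_mul_of_one_le_right (by positivity) ?_
  rw [inv_mul_eq_div, one_le_div h2]
  exact h

theorem partial_sum_le (s : ℝ) (hs : 1 < s) (n : ℕ) :
    ∑ k ∈ Finset.range n, (((k : ℝ) + 3) ^ s)⁻¹ ≤ 2 * (2 ^ s)⁻¹ / (s - 1) := by
  have hanti : AntitoneOn (fun x : ℝ => x ^ (-s)) (Set.Icc (2 : ℝ) (2 + n)) := by
    intro x hx y hy hxy
    exact Real.rpow_le_rpow_of_nonpos (by linarith [hx.1]) hxy (by linarith)
  have h := hanti.sum_le_integral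
  rw [integral_rpow] at h
  · have e : ∀ k : ℕ, (((k : ℝ) + 3) ^ s)⁻¹ = (2 + ((k + 1 : ℕ) : ℝ)) ^ (-s) := by
      intro k
      rw [← Real.rpow_neg (by positivity)]
      congr 1
      push_cast
      ring
    rw [Finset.sum_congr rfl fun k _ => e k]
    refine h.trans ?_
    have e2 : (2 : ℝ) ^ (-s + 1) = 2 * (2 ^ s)⁻¹ := by
      rw [Real.rpow_add two_pos, Real.rpow_one, Real.rpow_neg two_pos.le]
      ring
    rw [e2]
    have h3 : 0 ≤ (2 + (n : ℝ)) ^ (-s + 1) := by positivity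
    have hs1 : 0 < s - 1 := by linarith
    rw [show -s + 1 = -(s - 1) by ring] at *
    rw [div_neg, ← neg_div]
    gcongr
    linarith
  · right
    refine ⟨by linarith, ?_⟩
    rw [Set.uIcc_of_le (by linarith [(Nat.cast_nonneg n : (0 : ℝ) ≤ n)])]
    intro hx
    linarith [hx.1]

theorem jml_small (j : ℤ) (h1 : -2 ≤ j) (h2 : j ≤ 2) : jml j = 2 := by
  refine max_eq_right (abs_le.2 ⟨?_, ?_⟩)
  · exact_mod_cast h1
  · exact_mod_cast h2

theorem jml_big (n : ℕ) : jml ((n : ℤ) + 3) = (n : ℝ) + 3 := by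
  have : (0 : ℝ) ≤ n := Nat.cast_nonneg n
  unfold jml
  push_cast
  rw [abs_of_nonneg (by linarith)]
  exact max_eq_left (by linarith)

theorem jml_neg (j : ℤ) : jml (-j) = jml j := by
  simp [jml]

theorem inv_sum (s : ℝ) (hs : 1 < s) :
    (Summable fun i : ℤ => (jml i ^ s)⁻¹) ∧
      ∑' i : ℤ, (jml i ^ s)⁻¹ ≤ (2 ^ s)⁻¹ * (5 + 4 / (s - 1)) := by
  have hn : ∀ k : ℕ, 0 ≤ (((k : ℝ) + 3) ^ s)⁻¹ := fun k => by positivity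
  have hS := summable_of_sum_range_le hn (partial_sum_le s hs)
  have hT := Real.tsum_le_of_sum_range_le hn (partial_sum_le s hs)
  have hH := hS.hasSum
  set T := ∑' k : ℕ, (((k : ℝ) + 3) ^ s)⁻¹ with hTdef
  have h1 : HasSum (fun n : ℕ => (jml (n : ℤ) ^ s)⁻¹) (T + 3 * (2 ^ s)⁻¹) := by
    have := (hasSum_nat_add_iff (f := fun n : ℕ => (jml (n : ℤ) ^ s)⁻¹) 3 (g := T)).1 (by
      refine hH.congr_fun ?_ 
      intro n
      push_cast
      rw [jml_big])
    simp only [Finset.sum_range_succ, Finset.sum_range_zero] at this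
    rw [jml_small _ (by simp) (by simp), jml_small _ (by simp) (by simp),
      jml_small _ (by simp) (by simp)] at this
    have e : T + (0 + (2 ^ s)⁻¹ + (2 ^ s)⁻¹ + (2 ^ s)⁻¹) = T + 3 * (2 ^ s)⁻¹ := by ring
    rwa [e] at this
  have h2 : HasSum (fun n : ℕ => (jml (-((n : ℤ) + 1)) ^ s)⁻¹) (T + 2 * (2 ^ s)⁻¹) := by
    have := (hasSum_nat_add_iff (f := fun n : ℕ => (jml (-((n : ℤ) + 1)) ^ s)⁻¹) 2 (g := T)).1 (by
      refine hH.congr_fun ?_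
      intro n
      rw [jml_neg]
      push_cast
      rw [show (n : ℤ) + 2 + 1 = n + 3 by ring, jml_big])
    simp only [Finset.sum_range_succ, Finset.sum_range_zero] at this
    rw [jml_small _ (by simp) (by simp), jml_small _ (by simp) (by simp)] at this
    have e : T + (0 + (2 ^ s)⁻¹ + (2 ^ s)⁻¹) = T + 2 * (2 ^ s)⁻¹ := by ring
    rwa [e] at this
  have h3 := HasSum.of_nat_of_neg_add_one (f := fun i : ℤ => (jml i ^ s)⁻¹) h1 h2
  refine ⟨h3.summable, ?_⟩
  rw [h3.tsum_eq]
  have : (2 ^ s)⁻¹ * (5 + 4 / (s - 1)) = 5 * (2 ^ s)⁻¹ + 2 * (2 * (2 ^ s)⁻¹ / (s - 1)) := by ring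
  rw [this]
  linarith

/-- Schur-type kernel bound. -/
theorem kernel_sum (s : ℝ) (hs : 1 < s) (j : ℤ) :
    (Summable fun i : ℤ => (jml i ^ s * jml (j - i) ^ s)⁻¹) ∧
      jml j ^ s * ∑' i : ℤ, (jml i ^ s * jml (j - i) ^ s)⁻¹ ≤ 5 + 4 / (s - 1) := by
  obtain ⟨hU, hUle⟩ := inv_sum s hs
  have hU' : Summable fun i : ℤ => (jml (j - i) ^ s)⁻¹ :=
    (Equiv.subLeft j).summable_iff.2 hU
  have hUe : ∑' i : ℤ, (jml (j - i) ^ s)⁻¹ = ∑' i : ℤ, (jml i ^ s)⁻¹ :=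
    (Equiv.subLeft j).tsum_eq fun i : ℤ => (jml i ^ s)⁻¹
  have hR := ((hU.add hU').mul_left (2 ^ (s - 1))).mul_left (jml j ^ s)⁻¹
  have hS : Summable fun i : ℤ => (jml i ^ s * jml (j - i) ^ s)⁻¹ := by
    refine Summable.of_nonneg_of_le (fun i => ?_) (fun i => kernel_le s hs i j) hR
    have h1 := Real.rpow_pos_of_pos (jml_pos i) s
    have h3 := Real.rpow_pos_of_pos (jml_pos (j - i)) s
    positivity
  refine ⟨hS, ?_⟩
  have hle := hS.tsum_le_tsum (fun i => kernel_le s hs i j) hR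
  rw [tsum_mul_left, tsum_mul_left, hU.tsum_add hU', hUe] at hle
  have hj := Real.rpow_pos_of_pos (jml_pos j) s
  have h2 : (0 : ℝ) < 2 ^ s := by positivity
  calc _ ≤ jml j ^ s * ((jml j ^ s)⁻¹ * (2 ^ (s - 1) * (∑' i : ℤ, (jml i ^ s)⁻¹ +
        ∑' i : ℤ, (jml i ^ s)⁻¹))) := by gcongr
    _ = 2 ^ s * ∑' i : ℤ, (jml i ^ s)⁻¹ := by
        rw [mul_inv_cancel_left₀ hj.ne', Real.rpow_sub_one two_ne_zero]
        ring
    _ ≤ 2 ^ s * ((2 ^ s)⁻¹ * (5 + 4 / (s - 1))) := by gcongr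
    _ = _ := by rw [mul_inv_cancel_left₀ h2.ne']

/-- Cauchy-Schwarz for series. -/
theorem cauchy_schwarz_tsum (a b c : ℤ → ℝ) (ha : ∀ i, 0 ≤ a i) (hb : ∀ i, 0 ≤ b i)
    (hc : ∀ i, 0 ≤ c i) (habc : ∀ i, c i ^ 2 = a i * b i) (hA : Summable a) (hB : Summable b) :
    Summable c ∧ (∑' i, c i) ^ 2 ≤ (∑' i, a i) * ∑' i, b i := by
  have ea : ∀ i, √(a i) ^ (2 : ℝ) = a i := fun i => by
    rw [Real.rpow_two, Real.sq_sqrt (ha i)]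
  have eb : ∀ i, √(b i) ^ (2 : ℝ) = b i := fun i => by
    rw [Real.rpow_two, Real.sq_sqrt (hb i)]
  have ec : ∀ i, √(a i) * √(b i) = c i := fun i => by
    rw [← Real.sqrt_mul (ha i), ← habc, Real.sqrt_sq (hc i)]
  have h := Real.summable_and_inner_le_Lp_mul_Lq_tsum_of_nonneg
    (f := fun i => √(a i)) (g := fun i => √(b i)) Real.HolderConjugate.two_two
    (fun i => Real.sqrt_nonneg _) (fun i => Real.sqrt_nonneg _)
    (by simpa only [ea] using hA) (by simpa only [eb] using hB)
  simp only [ea, eb, ec] at h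
  refine ⟨h.1, ?_⟩
  rw [← Real.sqrt_eq_rpow, ← Real.sqrt_eq_rpow] at h
  refine (pow_le_pow_left₀ (tsum_nonneg hc) h.2 2).trans ?_
  rw [mul_pow, Real.sq_sqrt (tsum_nonneg ha), Real.sq_sqrt (tsum_nonneg hb)]

/-- Young for nonnegative summable sequences. -/
theorem conv_sum (F G : ℤ → ℝ) (hF0 : ∀ i, 0 ≤ F i) (hG0 : ∀ i, 0 ≤ G i)
    (hF : Summable F) (hG : Summable G) :
    (∀ j, Summable fun i => F i * G (j - i)) ∧
    HasSum (fun j => ∑' i, F i * G (j - i)) ((∑' i, F i) * ∑' i, G i) := by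
  have hP := hF.mul_of_nonneg hG hF0 hG0
  have hE := hF.tsum_mul_tsum hG hP
  let e : ℤ × ℤ ≃ ℤ × ℤ :=
    { toFun := fun x => (x.2, x.1 - x.2)
      invFun := fun y => (y.1 + y.2, y.1)
      left_inv := fun x => by ext <;> simp
      right_inv := fun x => by ext <;> simp }
  have hH : HasSum (fun x : ℤ × ℤ => F x.2 * G (x.1 - x.2)) ((∑' i, F i) * ∑' i, G i) := by
    rw [hE]
    exact e.hasSum_iff.2 hP.hasSum
  have h1 : ∀ j, Summable fun i => F i * G (j - i) := fun j => hH.summable.prod_factor j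
  exact ⟨h1, hH.prod_fiberwise fun j => (h1 j).hasSum⟩

/-- For `p > 1/2`, the convolution of two sequences with finite modified
Sobolev norm `‖f‖_p² = ∑_j ⌈j⌉^{2p}|f_j|²` is well defined (absolutely convergent) and
satisfies `‖f⋆g‖_p ≤ √(4 + 2(2p+1)/(2p−1))·‖f‖_p·‖g‖_p`. -/
theorem convolution_modified_sobolev_norm_bound
    (p : ℝ) (hp : 1 / 2 < p) (f g : ℤ → ℂ)
    (hf : Summable fun j : ℤ => jml j ^ (2 * p) * ‖f j‖ ^ 2)
    (hg : Summable fun j : ℤ => jml j ^ (2 * p) * ‖g j‖ ^ 2) :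
    (∀ j : ℤ, Summable fun i : ℤ => ‖f i‖ * ‖g (j - i)‖) ∧
    (Summable fun j : ℤ => jml j ^ (2 * p) * ‖∑' i : ℤ, f i * g (j - i)‖ ^ 2) ∧
    Real.sqrt (∑' j : ℤ, jml j ^ (2 * p) * ‖∑' i : ℤ, f i * g (j - i)‖ ^ 2) ≤
      Real.sqrt (4 + 2 * (2 * p + 1) / (2 * p - 1)) *
        Real.sqrt (∑' j : ℤ, jml j ^ (2 * p) * ‖f j‖ ^ 2) *
        Real.sqrt (∑' j : ℤ, jml j ^ (2 * p) * ‖g j‖ ^ 2) := by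
  have hs : 1 < 2 * p := by linarith
  have hw : ∀ j : ℤ, 0 < jml j ^ (2 * p) := fun j => Real.rpow_pos_of_pos (jml_pos j) _
  have hF0 : ∀ j : ℤ, 0 ≤ jml j ^ (2 * p) * ‖f j‖ ^ 2 := fun j =>
    mul_nonneg (hw j).le (sq_nonneg _)
  have hG0 : ∀ j : ℤ, 0 ≤ jml j ^ (2 * p) * ‖g j‖ ^ 2 := fun j =>
    mul_nonneg (hw j).le (sq_nonneg _)
  obtain ⟨hB, hH⟩ := conv_sum _ _ hF0 hG0 hf hg
  have hcs := fun j : ℤ => cauchy_schwarz_tsum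
    (fun i => (jml i ^ (2 * p) * jml (j - i) ^ (2 * p))⁻¹)
    (fun i => (jml i ^ (2 * p) * ‖f i‖ ^ 2) * (jml (j - i) ^ (2 * p) * ‖g (j - i)‖ ^ 2))
    (fun i => ‖f i‖ * ‖g (j - i)‖)
    (fun i => (inv_pos.2 (mul_pos (hw _) (hw _))).le)
    (fun i => mul_nonneg (hF0 _) (hG0 _))
    (fun i => by positivity)
    (fun i => by
      have h1 := (hw i).ne'
      have h2 := (hw (j - i)).ne'
      field_simp)
    (kernel_sum _ hs j).1 (hB j)
  have hC : 5 + 4 / (2 * p - 1) ≤ 4 + 2 * (2 * p + 1) / (2 * p - 1) := by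
    have : 2 * p - 1 ≠ 0 := by linarith
    have e : 4 + 2 * (2 * p + 1) / (2 * p - 1) = 6 + 4 / (2 * p - 1) := by
      field_simp
      ring
    rw [e]
    linarith
  have hC0 : 0 ≤ 4 + 2 * (2 * p + 1) / (2 * p - 1) := by
    have : 0 < 2 * p - 1 := by linarith
    have : 0 < p := by linarith
    positivity
  generalize 4 + 2 * (2 * p + 1) / (2 * p - 1) = C at hC hC0 ⊢
  have hbound : ∀ j : ℤ, jml j ^ (2 * p) * ‖∑' i : ℤ, f i * g (j - i)‖ ^ 2 ≤
      C * ∑' i : ℤ, (jml i ^ (2 * p) * ‖f i‖ ^ 2) *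
        (jml (j - i) ^ (2 * p) * ‖g (j - i)‖ ^ 2) := by
    intro j
    have hn : ‖∑' i : ℤ, f i * g (j - i)‖ ≤ ∑' i : ℤ, ‖f i‖ * ‖g (j - i)‖ := by
      have := norm_tsum_le_tsum_norm (f := fun i : ℤ => f i * g (j - i))
        (by simpa only [norm_mul] using (hcs j).1)
      simpa only [norm_mul] using this
    have hB0 : 0 ≤ ∑' i : ℤ, (jml i ^ (2 * p) * ‖f i‖ ^ 2) *
        (jml (j - i) ^ (2 * p) * ‖g (j - i)‖ ^ 2) :=
      tsum_nonneg fun i => mul_nonneg (hF0 _) (hG0 _)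
    calc _ ≤ jml j ^ (2 * p) * (∑' i : ℤ, ‖f i‖ * ‖g (j - i)‖) ^ 2 :=
          mul_le_mul_of_nonneg_left (pow_le_pow_left₀ (norm_nonneg _) hn 2) (hw j).le
      _ ≤ _ := mul_le_mul_of_nonneg_left (hcs j).2 (hw j).le
      _ = _ := (mul_assoc _ _ _).symm
      _ ≤ _ := mul_le_mul_of_nonneg_right ((kernel_sum _ hs j).2.trans hC) hB0
  have hR := hH.mul_left C
  have hS : Summable fun j : ℤ => jml j ^ (2 * p) * ‖∑' i : ℤ, f i * g (j - i)‖ ^ 2 :=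
    Summable.of_nonneg_of_le (fun j => mul_nonneg (hw j).le (sq_nonneg _)) hbound hR.summable
  refine ⟨fun j => (hcs j).1, hS, ?_⟩
  rw [← Real.sqrt_mul hC0, ← Real.sqrt_mul (mul_nonneg hC0 (tsum_nonneg hF0)), mul_assoc]
  refine Real.sqrt_le_sqrt ?_
  rw [← hR.tsum_eq]
  exact hS.tsum_le_tsum hbound hR.summable
end

section
/- Let 0 < θ < 1 and set C* := 13/(1−θ). With the notation of the context, assume |∑_{i∈ℤ} (α_i − β_i) i²| ≤ 10 ∑_{i∈ℤ} |α_i − β_i|. Then for every j ∈ ℤ with α_j + β_j ≥ 1 one has ∑_{i∈ℤ} |α_i − β_i| ⟨i⟩^{θ/2} ≤ C* · (∑_{i∈ℤ} (α_i + β_i) ⟨i⟩^θ − 2⟨j⟩^θ + |π|). -/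
open scoped BigOperators

/-- `⟨j⟩ := max(|j|,1)` as a real number. -/
noncomputable def jap (j : ℤ) : ℝ := max (|(j : ℝ)|) 1


lemma jap_one_le (i : ℤ) : 1 ≤ jap i := le_max_right _ _
lemma jap_abs_le (i : ℤ) : |(i : ℝ)| ≤ jap i := le_max_left _ _

lemma extract_max (s : Finset ℤ) (a b : ℤ → ℕ) (h : ∃ i ∈ s, 1 ≤ a i + b i) :
    ∃ p ∈ s, ∃ (a' b' : ℤ → ℕ) (σ : ℝ), (σ = 1 ∨ σ = -1) ∧ 1 ≤ a p + b p ∧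
      (∀ i ∈ s, 1 ≤ a i + b i → jap i ≤ jap p) ∧
      (∀ i, (a i : ℝ) + b i = (a' i + b' i) + if i = p then 1 else 0) ∧
      (∀ i, (a i : ℝ) - b i = (a' i - b' i) + if i = p then σ else 0) := by
  obtain ⟨i0, hi0, h0⟩ := h
  obtain ⟨p, hp, hmax⟩ := Finset.exists_max_image (s.filter fun i => 1 ≤ a i + b i) jap
    ⟨i0, by simp only [Finset.mem_filter]; exact ⟨hi0, h0⟩⟩
  rw [Finset.mem_filter] at hp
  have hm : ∀ i ∈ s, 1 ≤ a i + b i → jap i ≤ jap p := fun i hi h1 =>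
    hmax i (Finset.mem_filter.2 ⟨hi, h1⟩)
  refine ⟨p, hp.1, ?_⟩
  by_cases hap : 1 ≤ a p
  · refine ⟨fun i => if i = p then a i - 1 else a i, b, 1, Or.inl rfl, hp.2, hm, ?_, ?_⟩ <;>
    · intro i
      by_cases hi : i = p
      · subst hi
        simp only [if_true]
        push_cast [hap]
        ring
      · simp [hi]
  · have hbp : 1 ≤ b p := by omega
    refine ⟨a, fun i => if i = p then b i - 1 else b i, -1, Or.inr rfl, hp.2, hm, ?_, ?_⟩ <;>
    · intro i
      by_cases hi : i = p
      · subst hi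
        simp only [if_true]
        push_cast [hbp]
        ring
      · simp [hi]

lemma rpow_sum_sub (s : Finset ℤ) (g : ℤ → ℕ) (c : ℤ → ℝ) (hc : ∀ i, 1 ≤ c i) (r : ℝ)
    (hr0 : 0 < r) (hr1 : r ≤ 1) :
    (∑ i ∈ s, (g i : ℝ) * c i) ^ r ≤ ∑ i ∈ s, (g i : ℝ) * c i ^ r := by
  have hc0 : ∀ i, 0 ≤ c i := fun i => zero_le_one.trans (hc i)
  induction s using Finset.induction_on with
  | empty => simp [Real.zero_rpow hr0.ne']
  | insert x s hx ih =>
    rw [Finset.sum_insert hx, Finset.sum_insert hx]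
    refine (Real.rpow_add_le_add_rpow (mul_nonneg (Nat.cast_nonneg _) (hc0 x))
      (Finset.sum_nonneg fun i _ => mul_nonneg (Nat.cast_nonneg _) (hc0 i)) hr0.le hr1).trans ?_
    refine add_le_add ?_ ih
    rw [Real.mul_rpow (Nat.cast_nonneg _) (hc0 x)]
    refine mul_le_mul_of_nonneg_right ?_ (Real.rpow_nonneg (hc0 x) _)
    rcases Nat.eq_zero_or_pos (g x) with h | h
    · simp [h, Real.zero_rpow hr0.ne']
    · have : (1 : ℝ) ≤ g x := by exact_mod_cast h
      exact Real.rpow_le_self_of_one_le this hr1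

lemma rpow_tangent (x Y θ : ℝ) (hx : 1 ≤ x) (hY : 0 ≤ Y) (h0 : 0 < θ) (h1 : θ < 1) :
    (x + Y) ^ θ ≤ x ^ θ + θ * (Y * x ^ (θ - 1)) := by
  have hx0 : 0 < x := by linarith
  have hYx : 0 ≤ Y / x := by positivity
  have e : x + Y = x * (1 + Y / x) := by field_simp
  rw [e, Real.mul_rpow hx0.le (by linarith)]
  have := rpow_one_add_le_one_add_mul_self (s := Y / x) (by linarith) h0.le h1.le
  calc x ^ θ * (1 + Y / x) ^ θ ≤ x ^ θ * (1 + θ * (Y / x)) :=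
        mul_le_mul_of_nonneg_left this (Real.rpow_nonneg hx0.le _)
    _ = _ := by rw [Real.rpow_sub_one hx0.ne']; field_simp

lemma power_step (θ : ℝ) (h0 : 0 < θ) (h1 : θ < 1) (s : Finset ℤ) (g : ℤ → ℕ) (p q : ℤ) (P : ℝ)
    (hP : 0 ≤ P) (hmax : ∀ i ∈ s, 1 ≤ g i → jap i ≤ jap q)
    (hp : jap p ≤ jap q + (∑ i ∈ s, (g i : ℝ) * jap i + P)) :
    jap p ^ θ ≤ jap q ^ θ + θ * (∑ i ∈ s, (g i : ℝ) * jap i ^ θ + P) := by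
  have hj : ∀ i, 0 < jap i := fun i => zero_lt_one.trans_le (jap_one_le i)
  have hS : 0 ≤ ∑ i ∈ s, (g i : ℝ) * jap i :=
    Finset.sum_nonneg fun i _ => mul_nonneg (Nat.cast_nonneg _) (hj i).le
  refine (Real.rpow_le_rpow (hj p).le hp h0.le).trans ?_
  refine (rpow_tangent _ _ θ (jap_one_le q) (by linarith) h0 h1).trans ?_
  gcongr
  rw [add_mul, Finset.sum_mul]
  refine add_le_add (Finset.sum_le_sum fun i hi => ?_) ?_
  · rcases Nat.eq_zero_or_pos (g i) with h | h
    · simp [h]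
    · rw [mul_assoc]
      refine mul_le_mul_of_nonneg_left ?_ (Nat.cast_nonneg _)
      calc jap i * jap q ^ (θ - 1) ≤ jap i * jap i ^ (θ - 1) :=
            mul_le_mul_of_nonneg_left
              (Real.rpow_le_rpow_of_nonpos (hj i) (hmax i hi h) (by linarith)) (hj i).le
        _ = jap i ^ θ := by rw [Real.rpow_sub_one (hj i).ne']; field_simp [(hj i).ne']
  · exact mul_le_of_le_one_right hP
      (Real.rpow_le_one_of_one_le_of_nonpos (jap_one_le q) (by linarith))

lemma int_sq_sep (p q : ℤ) (h : |p| ≠ |q|) : |p| ≤ |p ^ 2 - q ^ 2| := by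
  rw [← sq_abs p, ← sq_abs q]
  have hp := abs_nonneg p
  have hq := abs_nonneg q
  generalize |p| = x at *
  generalize |q| = y at *
  rcases lt_or_gt_of_ne h with h | h
  · rw [abs_of_nonpos (by nlinarith)]; nlinarith
  · rw [abs_of_nonneg (by nlinarith)]; nlinarith

lemma jap_cond (p q : ℤ) (σ τ X : ℝ) (hσ : σ = 1 ∨ σ = -1) (hτ : τ = 1 ∨ τ = -1) (hX : 1 ≤ X)
    (h : |σ * (p : ℝ) ^ 2 + τ * (q : ℝ) ^ 2| ≤ X) (hne : σ = τ ∨ |p| ≠ |q|) : jap p ≤ X := by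
  refine max_le ?_ hX
  by_cases hst : σ = τ
  · subst hst
    have h1 : (p : ℝ) ^ 2 + (q : ℝ) ^ 2 ≤ X := by
      rcases hσ with rfl | rfl
      · have := le_of_abs_le h; linarith
      · have := neg_le_of_abs_le h; linarith
    have h2 : |p| ≤ p ^ 2 := by
      rw [← sq_abs p]
      have := abs_nonneg p
      nlinarith [mul_nonneg this this, Int.le_self_sq |p|]
    have h3 : |(p : ℝ)| ≤ (p : ℝ) ^ 2 := by exact_mod_cast h2
    nlinarith [sq_nonneg (q : ℝ)]
  · have hpq : |p| ≠ |q| := hne.resolve_left hst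
    have h1 : |(p : ℝ)| ≤ |(p : ℝ) ^ 2 - (q : ℝ) ^ 2| := by exact_mod_cast int_sq_sep p q hpq
    refine h1.trans (le_trans (le_of_eq ?_) h)
    rcases hσ with rfl | rfl <;> rcases hτ with rfl | rfl
    · exact absurd rfl hst
    · congr 1; ring
    · rw [← abs_neg]; congr 1; ring
    · exact absurd rfl hst

lemma top_two (θ : ℝ) (h0 : 0 < θ) (h1 : θ < 1) (s : Finset ℤ) (g : ℤ → ℕ) (d : ℤ → ℝ)
    (hd : ∀ i ∈ s, |d i| ≤ g i) (p q : ℤ) (σ τ π : ℝ)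
    (hσ : σ = 1 ∨ σ = -1) (hτ : τ = 1 ∨ τ = -1) (hqp : jap q ≤ jap p)
    (hπ : π = σ * p + τ * q + ∑ i ∈ s, d i * (i : ℝ))
    (hπint : π = 0 ∨ 1 ≤ |π|)
    (hsmall : |σ * (p : ℝ) ^ 2 + τ * (q : ℝ) ^ 2 + ∑ i ∈ s, d i * (i : ℝ) ^ 2| ≤
      10 * (∑ i ∈ s, (g i : ℝ) + 2))
    (hM : (∑ i ∈ s, g i = 0 ∧ σ + τ = 0) ∨ 2 ≤ ∑ i ∈ s, g i)
    (hnc : p ≠ q ∨ σ = τ) :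
    jap p ^ (θ / 2) + jap q ^ (θ / 2) ≤ 12 * ∑ i ∈ s, (g i : ℝ) * jap i ^ θ + 13 * |π| := by
  have hj : ∀ i, 0 < jap i := fun i => zero_lt_one.trans_le (jap_one_le i)
  have hqw : jap q ^ (θ / 2) ≤ jap p ^ (θ / 2) := Real.rpow_le_rpow (hj q).le hqp (by linarith)
  have hT : 0 ≤ ∑ i ∈ s, (g i : ℝ) * jap i ^ θ :=
    Finset.sum_nonneg fun i _ => mul_nonneg (Nat.cast_nonneg _) (Real.rpow_nonneg (hj i).le _)
  have hπ0 := abs_nonneg π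
  by_cases hc : σ = τ ∨ |p| ≠ |q|
  · have hsum : |∑ i ∈ s, d i * (i : ℝ) ^ 2| ≤ ∑ i ∈ s, (g i : ℝ) * jap i ^ 2 := by
      refine (Finset.abs_sum_le_sum_abs _ _).trans (Finset.sum_le_sum fun i hi => ?_)
      rw [abs_mul, abs_pow]
      exact mul_le_mul (hd i hi) (pow_le_pow_left₀ (abs_nonneg _) (jap_abs_le i) 2)
        (by positivity) (Nat.cast_nonneg _)
    have hM0 : 0 ≤ ∑ i ∈ s, (g i : ℝ) := Finset.sum_nonneg fun i _ => Nat.cast_nonneg _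
    have hSM : ∑ i ∈ s, (g i : ℝ) ≤ ∑ i ∈ s, (g i : ℝ) * jap i ^ 2 :=
      Finset.sum_le_sum fun i _ =>
        le_mul_of_one_le_right (Nat.cast_nonneg _) (one_le_pow₀ (jap_one_le i))
    have hpX : jap p ≤ 10 * (∑ i ∈ s, (g i : ℝ) + 2) + ∑ i ∈ s, (g i : ℝ) * jap i ^ 2 := by
      refine jap_cond p q σ τ _ hσ hτ (by linarith) ?_ hc
      rw [abs_le] at *
      constructor <;> linarith [hsum.1, hsum.2, hsmall.1, hsmall.2]
    rcases hM with ⟨hM, hst⟩ | hM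
    · have hg : ∀ i ∈ s, g i = 0 := fun i hi => Finset.sum_eq_zero_iff.1 hM i hi
      have hd0 : ∀ i ∈ s, d i = 0 := fun i hi => by
        have := hd i hi
        rw [hg i hi] at this
        simpa using this
      have e1 : ∑ i ∈ s, (g i : ℝ) = 0 := by exact_mod_cast hM
      have e2 : ∑ i ∈ s, (g i : ℝ) * jap i ^ 2 = 0 :=
        Finset.sum_eq_zero fun i hi => by simp [hg i hi]
      have e3 : ∑ i ∈ s, d i * (i : ℝ) = 0 :=
        Finset.sum_eq_zero fun i hi => by simp [hd0 i hi]
      rw [e1, e2] at hpX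
      have hne : σ ≠ τ := by
        rintro rfl
        rcases hσ with rfl | rfl <;> norm_num at hst
      have hpq : p ≠ q := hnc.resolve_right hne
      have hpi : 1 ≤ |π| := by
        refine hπint.resolve_left fun h => hpq ?_
        rw [e3] at hπ
        have hτ' : τ = -σ := by linarith
        rw [hτ', h] at hπ
        have h3 : σ * ((p : ℝ) - q) = 0 := by linarith
        have hs0 : σ ≠ 0 := by rcases hσ with rfl | rfl <;> norm_num
        have := (mul_eq_zero.1 h3).resolve_left hs0
        exact_mod_cast sub_eq_zero.1 this
      have hw : jap p ^ (θ / 2) ≤ 5 := by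
        calc jap p ^ (θ / 2) ≤ (25 : ℝ) ^ (θ / 2) :=
              Real.rpow_le_rpow (hj p).le (by linarith) (by linarith)
          _ ≤ (25 : ℝ) ^ (1 / 2 : ℝ) :=
              Real.rpow_le_rpow_of_exponent_le (by norm_num) (by linarith)
          _ = 5 := by
              rw [← Real.sqrt_eq_rpow, show (25 : ℝ) = 5 ^ 2 by norm_num]
              exact Real.sqrt_sq (by norm_num)
      linarith
    · have hM' : (2 : ℝ) ≤ ∑ i ∈ s, (g i : ℝ) := by exact_mod_cast hM
      have hw : jap p ^ (θ / 2) ≤ 5 * ∑ i ∈ s, (g i : ℝ) * jap i ^ θ := by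
        calc jap p ^ (θ / 2) ≤ (25 * ∑ i ∈ s, (g i : ℝ) * jap i ^ 2) ^ (θ / 2) :=
              Real.rpow_le_rpow (hj p).le (by linarith) (by linarith)
          _ = (25 : ℝ) ^ (θ / 2) * (∑ i ∈ s, (g i : ℝ) * jap i ^ 2) ^ (θ / 2) :=
              Real.mul_rpow (by norm_num) (by linarith)
          _ ≤ 5 * ∑ i ∈ s, (g i : ℝ) * jap i ^ θ := by
              refine mul_le_mul ?_ ?_ (Real.rpow_nonneg (by linarith) _) (by norm_num)
              · calc (25 : ℝ) ^ (θ / 2) ≤ (25 : ℝ) ^ (1 / 2 : ℝ) :=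
                      Real.rpow_le_rpow_of_exponent_le (by norm_num) (by linarith)
                  _ = 5 := by
                    rw [← Real.sqrt_eq_rpow, show (25 : ℝ) = 5 ^ 2 by norm_num]
                    exact Real.sqrt_sq (by norm_num)
              · refine (rpow_sum_sub s g (fun i => jap i ^ 2)
                  (fun i => one_le_pow₀ (jap_one_le i)) (θ / 2) (by linarith)
                  (by linarith)).trans (le_of_eq ?_)
                refine Finset.sum_congr rfl fun i _ => ?_
                rw [← Real.rpow_natCast, ← Real.rpow_mul (hj i).le]
                congr 2
                push_cast
                ring
      linarith
  · push Not at hc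
    obtain ⟨hne, habs⟩ := hc
    have hpq : p ≠ q := hnc.resolve_right hne
    have hq : q = -p := by
      rcases abs_eq_abs.1 habs with h | h
      · exact absurd h hpq
      · omega
    have hp0 : p ≠ 0 := by rintro rfl; exact hpq (by simpa using hq.symm)
    have hτ' : τ = -σ := by
      rcases hσ with rfl | rfl <;> rcases hτ with rfl | rfl
      · exact absurd rfl hne
      · norm_num
      · norm_num
      · exact absurd rfl hne
    have hjp : jap p = |(p : ℝ)| := by
      refine max_eq_left ?_
      exact_mod_cast Int.one_le_abs hp0
    have hsum : |∑ i ∈ s, d i * (i : ℝ)| ≤ ∑ i ∈ s, (g i : ℝ) * jap i := by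
      refine (Finset.abs_sum_le_sum_abs _ _).trans (Finset.sum_le_sum fun i hi => ?_)
      rw [abs_mul]
      exact mul_le_mul (hd i hi) (jap_abs_le i) (abs_nonneg _) (Nat.cast_nonneg _)
    have hS0 := (abs_nonneg _).trans hsum
    have h2 : 2 * |(p : ℝ)| ≤ |π| + ∑ i ∈ s, (g i : ℝ) * jap i := by
      have e : σ * (2 * (p : ℝ)) = π - ∑ i ∈ s, d i * (i : ℝ) := by
        rw [hπ, hτ', hq]; push_cast; ring
      have e2 : |σ * (2 * (p : ℝ))| = 2 * |(p : ℝ)| := by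
        have : |σ| = 1 := by rcases hσ with rfl | rfl <;> norm_num
        rw [abs_mul, this, abs_mul]; norm_num
      rw [← e2, e]
      exact (abs_sub _ _).trans (by linarith)
    have hw : jap p ^ (θ / 2) ≤ |π| + ∑ i ∈ s, (g i : ℝ) * jap i ^ θ := by
      calc jap p ^ (θ / 2) ≤ jap p ^ θ :=
            Real.rpow_le_rpow_of_exponent_le (jap_one_le p) (by linarith)
        _ ≤ (|π| + ∑ i ∈ s, (g i : ℝ) * jap i) ^ θ :=
            Real.rpow_le_rpow (hj p).le (by rw [hjp]; linarith [abs_nonneg (p : ℝ)]) h0.le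
        _ ≤ |π| ^ θ + (∑ i ∈ s, (g i : ℝ) * jap i) ^ θ :=
            Real.rpow_add_le_add_rpow hπ0 hS0 h0.le h1.le
        _ ≤ _ := by
            refine add_le_add ?_ (rpow_sum_sub s g jap jap_one_le θ h0 h1.le)
            rcases hπint with h | h
            · simp [h, Real.zero_rpow h0.ne']
            · exact Real.rpow_le_self_of_one_le h h1.le
    linarith

/-- Let `C* := 13/(1−θ)`. If `|∑ (α_i−β_i) i²| ≤ 10 ∑ |α_i−β_i|`, then for
every `j` with `α_j + β_j ≥ 1`,
`∑_i |α_i−β_i| ⟨i⟩^{θ/2} ≤ C*(∑_i (α_i+β_i)⟨i⟩^θ − 2⟨j⟩^θ + |π|)`. -/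
theorem small_divisor_weight_bound
    (θ : ℝ) (hθ0 : 0 < θ) (hθ1 : θ < 1)
    (α β : ℤ →₀ ℕ)
    (hmass : (α.sum fun _ n => n) = β.sum fun _ n => n)
    (hmass1 : 1 ≤ α.sum fun _ n => n)
    (π : ℝ)
    (hπ : π = ∑ i ∈ α.support ∪ β.support, (i : ℝ) * ((α i : ℝ) - (β i : ℝ)))
    (hsmall : |∑ i ∈ α.support ∪ β.support, ((α i : ℝ) - (β i : ℝ)) * (i : ℝ) ^ 2| ≤
      10 * ∑ i ∈ α.support ∪ β.support, |(α i : ℝ) - (β i : ℝ)|)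
    (j : ℤ) (hj : 1 ≤ α j + β j) :
    ∑ i ∈ α.support ∪ β.support, |(α i : ℝ) - (β i : ℝ)| * jap i ^ (θ / 2) ≤
      (13 / (1 - θ)) *
        ((∑ i ∈ α.support ∪ β.support, ((α i : ℝ) + (β i : ℝ)) * jap i ^ θ) -
          2 * jap j ^ θ + |π|) := by
  have hj0 : ∀ i, 0 < jap i := fun i => zero_lt_one.trans_le (jap_one_le i)
  have hmα : ∑ i ∈ α.support ∪ β.support, α i = α.sum fun _ n => n :=
    (Finsupp.sum_of_support_subset α (s := α.support ∪ β.support) Finset.subset_union_left (fun _ n => n)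
      (fun _ _ => rfl)).symm
  have hmβ : ∑ i ∈ α.support ∪ β.support, β i = β.sum fun _ n => n :=
    (Finsupp.sum_of_support_subset β (s := α.support ∪ β.support) Finset.subset_union_right (fun _ n => n)
      (fun _ _ => rfl)).symm
  have hjs : j ∈ α.support ∪ β.support := by
    simp only [Finset.mem_union, Finsupp.mem_support_iff]; omega
  generalize α.support ∪ β.support = s at *
  generalize (α.sum fun _ n => n) = m at *
  generalize (β.sum fun _ n => n) = m' at *
  subst hmass
  have hmαR : ∑ i ∈ s, (α i : ℝ) = m := by exact_mod_cast hmα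
  have hmβR : ∑ i ∈ s, (β i : ℝ) = m := by exact_mod_cast hmβ
  obtain ⟨p, hps, a1, b1, σ, hσ, -, hmax1, hadd1, hsub1⟩ := extract_max s α β ⟨j, hjs, hj⟩
  have hpS : ∀ c : ℤ → ℝ, ∑ i ∈ s, (if i = p then c i else 0) = c p := fun c => by
    simp [Finset.sum_ite_eq', hps]
  have htot1 : ∑ i ∈ s, ((a1 i : ℝ) + b1 i) + 1 = 2 * m := by
    have := Finset.sum_congr (rfl : s = s) fun i _ => hadd1 i
    rw [Finset.sum_add_distrib, Finset.sum_add_distrib, hpS (fun _ => 1), hmαR, hmβR] at this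
    linarith
  have htot1N : ∑ i ∈ s, (a1 i + b1 i) + 1 = 2 * m := by exact_mod_cast htot1
  have hex : ∃ i ∈ s, 1 ≤ a1 i + b1 i := by
    by_contra! hcon
    have : ∑ i ∈ s, (a1 i + b1 i) = 0 := Finset.sum_eq_zero fun i hi => by
      have := hcon i hi; omega
    omega
  obtain ⟨q, hqs, a2, b2, τ, hτ, hq1, hmax2, hadd2, hsub2⟩ := extract_max s a1 b1 hex
  have hqS : ∀ c : ℤ → ℝ, ∑ i ∈ s, (if i = q then c i else 0) = c q := fun c => by
    simp [Finset.sum_ite_eq', hqs]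
  set g : ℤ → ℕ := fun i => a2 i + b2 i with hg
  set d : ℤ → ℝ := fun i => (a2 i : ℝ) - b2 i with hd
  have hgR : ∀ i, (g i : ℝ) = a2 i + b2 i := fun i => by simp [hg]
  have hadd : ∀ i, (α i : ℝ) + β i =
      g i + (if i = q then 1 else 0) + (if i = p then 1 else 0) := fun i => by
    rw [hadd1, hadd2, hgR]
  have hsub : ∀ i, (α i : ℝ) - β i =
      d i + (if i = q then τ else 0) + (if i = p then σ else 0) := fun i => by
    rw [hsub1, hsub2]
  have hle1 : ∀ i, a1 i + b1 i ≤ α i + β i := fun i => by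
    have := hadd1 i
    have h2 : (0 : ℝ) ≤ if i = p then 1 else 0 := by split_ifs <;> norm_num
    have h3 : (a1 i : ℝ) + b1 i ≤ α i + β i := by linarith
    exact_mod_cast h3
  have hle2 : ∀ i, g i ≤ a1 i + b1 i := fun i => by
    have := hadd2 i
    have h2 : (0 : ℝ) ≤ if i = q then 1 else 0 := by split_ifs <;> norm_num
    have h3 : (a2 i : ℝ) + b2 i ≤ a1 i + b1 i := by linarith
    exact_mod_cast h3
  have hqp : jap q ≤ jap p := hmax1 q hqs (hq1.trans (hle1 q))
  have hjp : jap j ≤ jap p := hmax1 j hjs hj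
  have hmaxg : ∀ i ∈ s, 1 ≤ g i → jap i ≤ jap q := fun i hi h => hmax2 i hi (h.trans (hle2 i))
  have hdg : ∀ i, |d i| ≤ g i := fun i => by
    rw [hgR, abs_le]
    have h1 : (0 : ℝ) ≤ a2 i := Nat.cast_nonneg _
    have h2 : (0 : ℝ) ≤ b2 i := Nat.cast_nonneg _
    constructor <;> simp only [hd] <;> linarith
  have hAdd : ∀ c : ℤ → ℝ, ∑ i ∈ s, ((α i : ℝ) + β i) * c i =
      ∑ i ∈ s, (g i : ℝ) * c i + c q + c p := fun c => by
    rw [← hqS c, ← hpS c, ← Finset.sum_add_distrib, ← Finset.sum_add_distrib]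
    refine Finset.sum_congr rfl fun i _ => ?_
    rw [hadd]
    split_ifs <;> ring
  have hSub : ∀ c : ℤ → ℝ, ∑ i ∈ s, ((α i : ℝ) - β i) * c i =
      ∑ i ∈ s, d i * c i + τ * c q + σ * c p := fun c => by
    rw [← hqS (fun i => τ * c i), ← hpS (fun i => σ * c i), ← Finset.sum_add_distrib,
      ← Finset.sum_add_distrib]
    refine Finset.sum_congr rfl fun i _ => ?_
    rw [hsub]
    split_ifs <;> ring
  have hgtot : ∑ i ∈ s, (g i : ℝ) + 2 = 2 * m := by
    have := hAdd fun _ => 1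
    simp only [mul_one] at this
    rw [Finset.sum_add_distrib, hmαR, hmβR] at this
    linarith
  have hgtotN : ∑ i ∈ s, g i + 2 = 2 * m := by exact_mod_cast hgtot
  have hdtot : ∑ i ∈ s, d i + τ + σ = 0 := by
    have := hSub fun _ => 1
    simp only [mul_one] at this
    rw [Finset.sum_sub_distrib, hmαR, hmβR] at this
    linarith
  have hπ' : π = σ * p + τ * q + ∑ i ∈ s, d i * (i : ℝ) := by
    have := hSub fun i => (i : ℝ)
    have e : π = ∑ i ∈ s, ((α i : ℝ) - β i) * (i : ℝ) := by
      rw [hπ]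
      exact Finset.sum_congr rfl fun i _ => mul_comm _ _
    rw [e, this]
    ring
  have hπint : π = 0 ∨ 1 ≤ |π| := by
    have e : π = ((∑ i ∈ s, i * ((α i : ℤ) - β i) : ℤ) : ℝ) := by rw [hπ]; push_cast; rfl
    generalize (∑ i ∈ s, i * ((α i : ℤ) - β i) : ℤ) = z at e
    by_cases hz : z = 0
    · left; simp [e, hz]
    · right; rw [e]; exact_mod_cast Int.one_le_abs hz
  have habsle : ∀ i, |(α i : ℝ) - β i| ≤ α i + β i := fun i => by
    have h1 : (0 : ℝ) ≤ α i := Nat.cast_nonneg _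
    have h2 : (0 : ℝ) ≤ β i := Nat.cast_nonneg _
    rw [abs_le]
    constructor <;> linarith
  have hsm : |σ * (p : ℝ) ^ 2 + τ * (q : ℝ) ^ 2 + ∑ i ∈ s, d i * (i : ℝ) ^ 2| ≤
      10 * (∑ i ∈ s, (g i : ℝ) + 2) := by
    have e := hSub fun i => (i : ℝ) ^ 2
    have h3 : ∑ i ∈ s, |(α i : ℝ) - β i| ≤ ∑ i ∈ s, (g i : ℝ) + 2 := by
      refine (Finset.sum_le_sum fun i _ => habsle i).trans ?_
      rw [Finset.sum_add_distrib, hmαR, hmβR]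
      linarith
    rw [e] at hsmall
    calc _ = |∑ i ∈ s, d i * (i : ℝ) ^ 2 + τ * (q : ℝ) ^ 2 + σ * (p : ℝ) ^ 2| := by
          congr 1; ring
      _ ≤ _ := hsmall
      _ ≤ _ := by linarith
  have hM : (∑ i ∈ s, g i = 0 ∧ σ + τ = 0) ∨ 2 ≤ ∑ i ∈ s, g i := by
    by_cases h : ∑ i ∈ s, g i = 0
    · left
      refine ⟨h, ?_⟩
      have : ∑ i ∈ s, d i = 0 := Finset.sum_eq_zero fun i hi => by
        have h5 := hdg i
        rw [Finset.sum_eq_zero_iff.1 h i hi] at h5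
        simpa using h5
      linarith
    · right; omega
  have hwT : ∑ i ∈ s, (g i : ℝ) * jap i ^ (θ / 2) ≤ ∑ i ∈ s, (g i : ℝ) * jap i ^ θ :=
    Finset.sum_le_sum fun i _ => mul_le_mul_of_nonneg_left
      (Real.rpow_le_rpow_of_exponent_le (jap_one_le i) (by linarith)) (Nat.cast_nonneg _)
  have hT0 : 0 ≤ ∑ i ∈ s, (g i : ℝ) * jap i ^ θ :=
    Finset.sum_nonneg fun i _ => mul_nonneg (Nat.cast_nonneg _) (Real.rpow_nonneg (hj0 i).le _)
  have hπ0 := abs_nonneg π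
  have hL : ∑ i ∈ s, |(α i : ℝ) - β i| * jap i ^ (θ / 2) ≤
      13 * (∑ i ∈ s, (g i : ℝ) * jap i ^ θ + |π|) := by
    by_cases hnc : p ≠ q ∨ σ = τ
    · have h1 := top_two θ hθ0 hθ1 s g d (fun i _ => hdg i) p q σ τ π hσ hτ hqp hπ' hπint hsm hM hnc
      have h2 : ∑ i ∈ s, |(α i : ℝ) - β i| * jap i ^ (θ / 2) ≤
          ∑ i ∈ s, ((α i : ℝ) + β i) * jap i ^ (θ / 2) :=
        Finset.sum_le_sum fun i _ =>
          mul_le_mul_of_nonneg_right (habsle i) (Real.rpow_nonneg (hj0 i).le _)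
      rw [hAdd fun i => jap i ^ (θ / 2)] at h2
      linarith
    · push Not at hnc
      obtain ⟨rfl, hne⟩ := hnc
      have hst : τ + σ = 0 := by
        rcases hσ with rfl | rfl <;> rcases hτ with rfl | rfl
        · exact absurd rfl hne
        · norm_num
        · norm_num
        · exact absurd rfl hne
      have h2 : ∑ i ∈ s, |(α i : ℝ) - β i| * jap i ^ (θ / 2) ≤
          ∑ i ∈ s, (g i : ℝ) * jap i ^ (θ / 2) := by
        refine Finset.sum_le_sum fun i _ =>
          mul_le_mul_of_nonneg_right ?_ (Real.rpow_nonneg (hj0 i).le _)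
        have : (α i : ℝ) - β i = d i := by
          rw [hsub]
          split_ifs
          · linarith
          · ring
        rw [this]
        exact hdg i
      linarith
  have hpj : jap p ≤ jap q + (∑ i ∈ s, (g i : ℝ) * jap i + |π|) := by
    have hsum : |∑ i ∈ s, d i * (i : ℝ)| ≤ ∑ i ∈ s, (g i : ℝ) * jap i := by
      refine (Finset.abs_sum_le_sum_abs _ _).trans (Finset.sum_le_sum fun i hi => ?_)
      rw [abs_mul]
      exact mul_le_mul (hdg i) (jap_abs_le i) (abs_nonneg _) (Nat.cast_nonneg _)
    have hS0 := (abs_nonneg _).trans hsum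
    refine max_le ?_ (by linarith [jap_one_le q])
    have hσ1 : |σ| = 1 := by rcases hσ with rfl | rfl <;> norm_num
    have hτ1 : |τ| = 1 := by rcases hτ with rfl | rfl <;> norm_num
    have e1 : |σ * (p : ℝ)| = |(p : ℝ)| := by rw [abs_mul, hσ1, one_mul]
    have e2 : |τ * (q : ℝ)| = |(q : ℝ)| := by rw [abs_mul, hτ1, one_mul]
    have e3 : σ * (p : ℝ) = π - τ * q - ∑ i ∈ s, d i * (i : ℝ) := by rw [hπ']; ring
    have h4 := abs_sub (π - τ * q) (∑ i ∈ s, d i * (i : ℝ))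
    have h5 := abs_sub π (τ * q)
    rw [← e3, e1] at h4
    rw [e2] at h5
    linarith [jap_abs_le q]
  have hpow := power_step θ hθ0 hθ1 s g p q |π| hπ0 hmaxg hpj
  have hjpow : jap j ^ θ ≤ jap p ^ θ := Real.rpow_le_rpow (hj0 j).le hjp hθ0.le
  rw [hAdd fun i => jap i ^ θ]
  have h1θ : 0 < 1 - θ := by linarith
  refine hL.trans ?_
  rw [div_mul_eq_mul_div, le_div_iff₀ h1θ]
  linarith
end

section
/- Assume the Diophantine setting of the context and set τ := (15/2)(2+q). Then for all finitely supported α, β : ℤ → ℕ with equal total mass |α| = |β| ≥ 1, α ≠ β, and every j ∈ ℤ with α_j + β_j ≥ 1, one has γ · ⟨j⟩^{2τ} ≤ e^{27(2+q)} · (N + |π|)^{3τ} · |∑_{i∈ℤ} ω_i (α_i − β_i)| · ∏_{i∈ℤ} ⟨i⟩^{τ(α_i+β_i)}, where N := |α| + |β| and π := ∑_{i∈ℤ} i·(α_i − β_i). -/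
open scoped BigOperators

lemma one_le_jap (j : ℤ) : 1 ≤ jap j := le_max_right _ _

lemma jap_pos (j : ℤ) : 0 < jap j := lt_of_lt_of_le one_pos (one_le_jap j)

lemma abs_le_jap (j : ℤ) : |(j : ℝ)| ≤ jap j := le_max_left _ _

/-- multiplicative weight of a multi-index -/
noncomputable def PP (μ : ℤ →₀ ℕ) : ℝ := μ.prod fun i m => jap i ^ m

/-- linear functional of a multi-index -/
noncomputable def LL (μ : ℤ →₀ ℕ) (f : ℤ → ℝ) : ℝ := μ.sum fun i m => f i * (m : ℝ)

lemma PP_add (μ ν : ℤ →₀ ℕ) : PP (μ + ν) = PP μ * PP ν := by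
  unfold PP
  apply Finsupp.prod_add_index'
  · intro i; simp
  · intro i a b; exact pow_add _ _ _

lemma PP_single (a : ℤ) : PP (Finsupp.single a 1) = jap a := by
  unfold PP
  rw [Finsupp.prod_single_index] <;> simp

lemma LL_add (μ ν : ℤ →₀ ℕ) (f : ℤ → ℝ) : LL (μ + ν) f = LL μ f + LL ν f := by
  unfold LL
  apply Finsupp.sum_add_index'
  · intro i; simp
  · intro i a b; push_cast; ring

lemma LL_single (a : ℤ) (f : ℤ → ℝ) : LL (Finsupp.single a 1) f = f a := by
  unfold LL
  rw [Finsupp.sum_single_index] <;> simp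

lemma one_le_PP (μ : ℤ →₀ ℕ) : 1 ≤ PP μ := by
  unfold PP Finsupp.prod
  apply Finset.prod_induction _ (fun x : ℝ => 1 ≤ x)
  · intro a b ha hb; exact one_le_mul_of_one_le_of_one_le ha hb
  · exact le_rfl
  · intro i _
    exact one_le_pow₀ (one_le_jap i)

lemma split_single (μ : ℤ →₀ ℕ) (a : ℤ) (ha : a ∈ μ.support) :
    ∃ ν, μ = Finsupp.single a 1 + ν := by
  refine ⟨μ - Finsupp.single a 1, ?_⟩
  rw [add_tsub_cancel_of_le]
  rw [Finsupp.single_le_iff]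
  exact Nat.one_le_iff_ne_zero.mpr (Finsupp.mem_support_iff.mp ha)

lemma jap_le_PP (μ : ℤ →₀ ℕ) (a : ℤ) (ha : a ∈ μ.support) : jap a ≤ PP μ := by
  obtain ⟨ν, rfl⟩ := split_single μ a ha
  rw [PP_add, PP_single]
  exact le_mul_of_one_le_right (jap_pos a).le (one_le_PP ν)

lemma LL_abs_le (μ : ℤ →₀ ℕ) (f : ℤ → ℝ) (C : ℝ) (h : ∀ i ∈ μ.support, |f i| ≤ C) :
    |LL μ f| ≤ C * LL μ (fun _ => 1) := by
  unfold LL Finsupp.sum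
  rw [Finset.mul_sum]
  refine (Finset.abs_sum_le_sum_abs _ _).trans (Finset.sum_le_sum ?_)
  intro i hi
  simp only [abs_mul, one_mul, Nat.abs_cast]
  exact mul_le_mul_of_nonneg_right (h i hi) (Nat.cast_nonneg _)

lemma LL_one_nonneg (μ : ℤ →₀ ℕ) : 0 ≤ LL μ (fun _ => 1) := by
  unfold LL Finsupp.sum
  apply Finset.sum_nonneg
  intro i _; positivity

lemma LL_union (α β : ℤ →₀ ℕ) (f : ℤ → ℝ) :
    ∑ i ∈ α.support ∪ β.support, f i * ((α i : ℝ) - (β i : ℝ)) = LL α f - LL β f := by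
  unfold LL
  rw [Finsupp.sum_of_support_subset α Finset.subset_union_left _ (by simp),
    Finsupp.sum_of_support_subset β Finset.subset_union_right _ (by simp),
    ← Finset.sum_sub_distrib]
  exact Finset.sum_congr rfl fun i _ => by ring

lemma PP_union (α β : ℤ →₀ ℕ) (t : ℝ) :
    ∏ i ∈ α.support ∪ β.support, jap i ^ (t * ((α i : ℝ) + (β i : ℝ))) = (PP α * PP β) ^ t := by
  unfold PP
  rw [Finsupp.prod_of_support_subset α Finset.subset_union_left _ (by simp),
    Finsupp.prod_of_support_subset β Finset.subset_union_right _ (by simp),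
    ← Finset.prod_mul_distrib, ← Real.finsetProd_rpow]
  · refine Finset.prod_congr rfl fun i _ => ?_
    rw [← pow_add, mul_comm t, Real.rpow_mul (jap_pos i).le, ← Nat.cast_add, Real.rpow_natCast]
  · intro i _
    have := jap_pos i
    positivity

lemma two_le_jap (n : ℤ) (h : 2 ≤ |n|) : 2 ≤ jap n := by
  refine le_trans ?_ (abs_le_jap n)
  exact_mod_cast h

lemma jap_eq_one (n : ℤ) (h : ¬ 2 ≤ |n|) : jap n = 1 := by
  unfold jap
  apply max_eq_right
  have : |n| ≤ 1 := by omega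
  exact_mod_cast this

lemma one_add_sq_le (k : ℕ) : 1 + (k + 1) ^ 2 ≤ 2 ^ (2 * k + 1) := by
  induction k with
  | zero => norm_num
  | succ k ih =>
    have : 2 ^ (2 * (k + 1) + 1) = 4 * 2 ^ (2 * k + 1) := by ring
    rw [this]; nlinarith

/-- bound of one Diophantine factor -/
lemma factor_bound (s : ℝ) (hs : 1 ≤ s) (x : ℝ) (hx : 2 ≤ x) (m k : ℕ) (hmk : m ≤ k)
    (hm : 1 ≤ m) : 1 + (m : ℝ) ^ 2 * x ^ (2 * s) ≤ ((x ^ k) ^ 3) ^ s := by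
  have hx0 : 0 ≤ x := by linarith
  have h1 : 1 ≤ x ^ (2 * s) := Real.one_le_rpow (by linarith) (by linarith)
  have h2 : x ^ (2 * s) = (x ^ 2) ^ s := by
    rw [Real.rpow_mul hx0]; norm_num
  calc 1 + (m : ℝ) ^ 2 * x ^ (2 * s) ≤ (1 + (m : ℝ) ^ 2) * x ^ (2 * s) := by nlinarith
    _ ≤ (1 + (m : ℝ) ^ 2) ^ s * (x ^ 2) ^ s := by
        rw [h2]
        gcongr
        apply Real.self_le_rpow_of_one_le _ hs
        nlinarith [sq_nonneg (m : ℝ)]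
    _ = ((1 + (m : ℝ) ^ 2) * x ^ 2) ^ s := by
        rw [Real.mul_rpow] <;> positivity
    _ ≤ ((x ^ k) ^ 3) ^ s := by
        apply Real.rpow_le_rpow (by positivity) _ (by linarith)
        obtain ⟨r, rfl⟩ : ∃ r, m = r + 1 := ⟨m - 1, by omega⟩
        have h3 : (1 + ((r + 1 : ℕ) : ℝ) ^ 2) ≤ 2 ^ (2 * r + 1) := by
          exact_mod_cast one_add_sq_le r
        calc (1 + ((r + 1 : ℕ) : ℝ) ^ 2) * x ^ 2 ≤ x ^ (2 * r + 1) * x ^ 2 := by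
              gcongr
              exact h3.trans (by gcongr)
          _ = x ^ (2 * r + 3) := by rw [← pow_add]
          _ ≤ x ^ (k * 3) := pow_le_pow_right₀ (by linarith) (by omega)
          _ = _ := by rw [pow_mul]

lemma K_bound (s : ℝ) (hs : 1 ≤ s) (α β : ℤ →₀ ℕ) (ℓ : ℤ →₀ ℤ) (N : ℕ)
    (hℓ : ∀ n, (ℓ n).natAbs ≤ α n + β n) (hN : ∀ n, (ℓ n).natAbs ≤ N) :
    ∏ n ∈ ℓ.support, (1 + (ℓ n : ℝ) ^ 2 * jap n ^ (2 * s)) ≤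
      (1 + (N : ℝ) ^ 2) ^ 3 * ((PP α * PP β) ^ 3) ^ s := by
  have hPP : ((PP α * PP β) ^ 3) ^ s =
      ∏ n ∈ α.support ∪ β.support, ((jap n ^ (α n + β n)) ^ 3) ^ s := by
    have h := PP_union α β (3 * s)
    rw [Real.rpow_mul (mul_nonneg (by linarith [one_le_PP α]) (by linarith [one_le_PP β]))] at h
    have e3 : ∀ y : ℝ, y ^ (3 : ℝ) = y ^ 3 := fun y => by norm_cast
    rw [e3] at h
    rw [← h]
    refine Finset.prod_congr rfl fun n _ => ?_
    have := jap_pos n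
    rw [mul_comm (3 * s), Real.rpow_mul this.le, Real.rpow_mul (by positivity), e3, ← Nat.cast_add,
      Real.rpow_natCast]
  rw [hPP]
  have hsub : ℓ.support ⊆ α.support ∪ β.support := by
    intro n hn
    have h1 := hℓ n
    have h2 := Finsupp.mem_support_iff.mp hn
    simp only [Finset.mem_union, Finsupp.mem_support_iff]
    omega
  have hf1 : ∀ n, 1 ≤ ((jap n ^ (α n + β n)) ^ 3) ^ s := fun n =>
    Real.one_le_rpow (one_le_pow₀ (one_le_pow₀ (one_le_jap n))) (by linarith)
  have hstep : ∏ n ∈ ℓ.support, (1 + (ℓ n : ℝ) ^ 2 * jap n ^ (2 * s)) ≤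
      ∏ n ∈ ℓ.support, ((if 2 ≤ |n| then 1 else 1 + (N : ℝ) ^ 2) *
        ((jap n ^ (α n + β n)) ^ 3) ^ s) := by
    apply Finset.prod_le_prod
    · intro n _
      have := jap_pos n
      positivity
    · intro n hn
      have h2 := Finsupp.mem_support_iff.mp hn
      have hsq : (ℓ n : ℝ) ^ 2 = ((ℓ n).natAbs : ℝ) ^ 2 := by
        rw [Nat.cast_natAbs, Int.cast_abs, sq_abs]
      rw [hsq]
      split_ifs with h
      · rw [one_mul]
        exact factor_bound s hs _ (two_le_jap n h) _ _ (hℓ n) (by omega)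
      · rw [jap_eq_one n h]
        simp only [Real.one_rpow, one_pow, mul_one]
        have : ((ℓ n).natAbs : ℝ) ≤ N := by exact_mod_cast hN n
        gcongr
  refine hstep.trans ?_
  rw [Finset.prod_mul_distrib]
  apply mul_le_mul
  · rw [← Finset.prod_filter_mul_prod_filter_not ℓ.support (fun n : ℤ => 2 ≤ |n|)]
    rw [Finset.prod_congr rfl (g := fun _ => (1 : ℝ)) (fun n hn => by
      rw [if_pos (Finset.mem_filter.mp hn).2])]
    rw [Finset.prod_congr (s₁ := ℓ.support.filter (fun n : ℤ => ¬ 2 ≤ |n|)) rfl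
      (g := fun _ => 1 + (N : ℝ) ^ 2) (fun n hn => by
      rw [if_neg (Finset.mem_filter.mp hn).2])]
    rw [Finset.prod_const_one, one_mul, Finset.prod_const]
    apply pow_le_pow_right₀
    · nlinarith [sq_nonneg (N : ℝ)]
    · have : ℓ.support.filter (fun n : ℤ => ¬ 2 ≤ |n|) ⊆ Finset.Icc (-1) 1 := by
        intro n hn
        have := (Finset.mem_filter.mp hn).2
        rw [Finset.mem_Icc]
        have h' : |n| ≤ 1 := by omega
        exact abs_le.mp h'
      exact (Finset.card_le_card this).trans (by simp)
  · exact Finset.prod_le_prod_of_subset_of_one_le hsub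
      (fun n _ => (zero_le_one.trans (hf1 n))) (fun n _ _ => hf1 n)
  · exact Finset.prod_nonneg fun n _ => (zero_le_one.trans (hf1 n))
  · positivity

lemma apply_le_LL (μ : ℤ →₀ ℕ) (n : ℤ) : (μ n : ℝ) ≤ LL μ (fun _ => 1) := by
  unfold LL Finsupp.sum
  simp only [one_mul]
  by_cases h : n ∈ μ.support
  · exact Finset.single_le_sum (f := fun i => (μ i : ℝ)) (fun i _ => Nat.cast_nonneg _) h
  · rw [Finsupp.notMem_support_iff.mp h, Nat.cast_zero]
    exact Finset.sum_nonneg fun i _ => Nat.cast_nonneg _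

lemma dio_bound (s γ : ℝ) (hs : 1 ≤ s) (hγ0 : 0 < γ) (ω : ℤ → ℝ)
    (hdio : ∀ ℓ : ℤ →₀ ℤ, ℓ ≠ 0 →
      γ * ∏ n ∈ ℓ.support, (1 + (ℓ n : ℝ) ^ 2 * jap n ^ (2 * s))⁻¹ <
        |∑ n ∈ ℓ.support, ω n * (ℓ n : ℝ)|)
    (α β δ α' β' : ℤ →₀ ℕ) (hα : α = δ + α') (hβ : β = δ + β') (hne : α ≠ β)
    (N : ℕ) (hN : (N : ℝ) = LL α (fun _ => 1) + LL β (fun _ => 1)) :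
    γ ≤ |LL α ω - LL β ω| * ((1 + (N : ℝ) ^ 2) ^ 3 * ((PP α' * PP β') ^ 3) ^ s) := by
  set ℓ : ℤ →₀ ℤ := α.mapRange (fun n : ℕ => (n : ℤ)) (by simp) -
    β.mapRange (fun n : ℕ => (n : ℤ)) (by simp) with hℓ
  have hv : ∀ n, ℓ n = (α n : ℤ) - (β n : ℤ) := by
    intro n; simp [hℓ]
  have hℓ0 : ℓ ≠ 0 := by
    intro h0
    apply hne
    ext n
    have := hv n
    rw [h0] at this
    simp at this
    omega
  have hαN : ∀ n, α n ≤ N := fun n => by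
    have h1 := apply_le_LL α n
    have h2 := LL_one_nonneg β
    have : (α n : ℝ) ≤ N := by linarith
    exact_mod_cast this
  have hβN : ∀ n, β n ≤ N := fun n => by
    have h1 := apply_le_LL β n
    have h2 := LL_one_nonneg α
    have : (β n : ℝ) ≤ N := by linarith
    exact_mod_cast this
  have hd := hdio ℓ hℓ0
  have hsum : ∑ n ∈ ℓ.support, ω n * (ℓ n : ℝ) = LL α ω - LL β ω := by
    rw [← LL_union]
    rw [Finset.sum_subset (s₂ := α.support ∪ β.support)]
    · refine Finset.sum_congr rfl fun n _ => ?_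
      rw [hv]; push_cast; ring
    · intro n hn
      have h1 := hv n
      have h2 := Finsupp.mem_support_iff.mp hn
      simp only [Finset.mem_union, Finsupp.mem_support_iff]
      omega
    · intro n _ hn
      rw [Finsupp.notMem_support_iff.mp hn]; simp
  rw [hsum, Finset.prod_inv_distrib] at hd
  have hK := K_bound s hs α' β' ℓ N (fun n => by
      have h1 := hv n
      rw [hα, hβ] at h1
      simp only [Finsupp.add_apply] at h1
      push_cast at h1
      omega) (fun n => by
      have h1 := hv n
      have h2 := hαN n
      have h3 := hβN n
      omega)
  have hKpos : 0 < ∏ n ∈ ℓ.support, (1 + (ℓ n : ℝ) ^ 2 * jap n ^ (2 * s)) := by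
    apply Finset.prod_pos
    intro n _
    have := jap_pos n
    positivity
  rw [← div_eq_mul_inv, div_lt_iff₀ hKpos] at hd
  exact hd.le.trans (mul_le_mul_of_nonneg_left hK (abs_nonneg _))

/-- final bookkeeping of powers -/
lemma finish (s γ D R N X Y A : ℝ) (hs : 1 ≤ s) (hD : 0 ≤ D) (hR : 2 ≤ R)
    (hX : 1 ≤ X) (hY : 1 ≤ Y) (hA : 1 ≤ A) (hN1 : 1 ≤ N) (hNR : N ≤ R)
    (h : γ ≤ D * ((1 + N ^ 2) ^ 3 * (X ^ 3) ^ s))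
    (hle : 8 * R ^ 6 * X ^ 3 * A ^ 30 ≤ 2 ^ 54 * R ^ 45 * Y ^ 15) :
    γ * (A ^ 30) ^ s ≤ Real.exp (54 * s) * (R ^ 45) ^ s * D * (Y ^ 15) ^ s := by
  have h8 : (1 + N ^ 2) ^ 3 ≤ (8 * R ^ 6) ^ s := by
    have h1 : (1 + N ^ 2) ^ 3 ≤ (2 * R ^ 2) ^ 3 := by
      gcongr
      nlinarith
    have h2 : (2 * R ^ 2) ^ 3 = 8 * R ^ 6 := by ring
    rw [h2] at h1
    refine h1.trans (Real.self_le_rpow_of_one_le ?_ hs)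
    have : 1 ≤ R ^ 6 := one_le_pow₀ (by linarith)
    linarith
  have he : ((2 : ℝ) ^ 54) ^ s ≤ Real.exp (54 * s) := by
    rw [Real.exp_mul]
    apply Real.rpow_le_rpow (by positivity) _ (by linarith)
    have : Real.exp 54 = Real.exp 1 ^ 54 := by rw [← Real.exp_nat_mul]; norm_num
    rw [this]
    gcongr
    linarith [Real.add_one_le_exp (1 : ℝ)]
  have hR0 : 0 ≤ R := by linarith
  have hX0 : 0 ≤ X := by linarith
  have hY0 : 0 ≤ Y := by linarith
  have hA0 : 0 ≤ A := by linarith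
  calc γ * (A ^ 30) ^ s ≤ (D * ((8 * R ^ 6) ^ s * (X ^ 3) ^ s)) * (A ^ 30) ^ s := by
        gcongr
        exact h.trans (by gcongr)
    _ = D * (8 * R ^ 6 * X ^ 3 * A ^ 30) ^ s := by
        rw [Real.mul_rpow (x := 8 * R ^ 6 * X ^ 3), Real.mul_rpow (x := 8 * R ^ 6)] <;>
          first | positivity | ring
    _ ≤ D * (2 ^ 54 * R ^ 45 * Y ^ 15) ^ s := by gcongr
    _ = D * (((2 : ℝ) ^ 54) ^ s * (R ^ 45) ^ s * (Y ^ 15) ^ s) := by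
        rw [Real.mul_rpow (x := 2 ^ 54 * R ^ 45), Real.mul_rpow (x := 2 ^ 54)] <;> positivity
    _ ≤ D * (Real.exp (54 * s) * (R ^ 45) ^ s * (Y ^ 15) ^ s) := by gcongr
    _ = _ := by ring

lemma jap_le_of_abs_le (a : ℤ) (C : ℝ) (h1 : 1 ≤ C) (h : |(a : ℝ)| ≤ C) : jap a ≤ C :=
  max_le h h1

lemma abs_le_sq_int (a : ℤ) : |(a : ℝ)| ≤ (a : ℝ) ^ 2 := by
  have : |a| ≤ a ^ 2 := by
    rw [← sq_abs]
    rcases eq_or_ne a 0 with h | h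
    · simp [h]
    · nlinarith [Int.one_le_abs h]
  exact_mod_cast this

lemma abs_le_diff_sq (a b : ℤ) (h1 : a ≠ b) (h2 : a ≠ -b) :
    |(a : ℝ)| ≤ |(a : ℝ) ^ 2 - (b : ℝ) ^ 2| := by
  have : |a| ≤ |a ^ 2 - b ^ 2| := by
    have e : a ^ 2 - b ^ 2 = (a - b) * (a + b) := by ring
    rw [e, abs_mul]
    have h3 : 1 ≤ |a - b| := Int.one_le_abs (sub_ne_zero.mpr h1)
    have h4 : 1 ≤ |a + b| := Int.one_le_abs (fun h => h2 (by omega))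
    have h5 : 2 * |a| ≤ |a - b| + |a + b| := by
      have : 2 * |a| = |(a - b) + (a + b)| := by
        rw [show (a - b) + (a + b) = 2 * a by ring, abs_mul]; norm_num
      rw [this]; exact abs_add_le _ _
    nlinarith
  exact_mod_cast this

/-- bounds for a remainder multi-index -/
lemma rem_sq (μ : ℤ →₀ ℕ) (Q : ℝ) (h : PP μ ≤ Q) :
    |LL μ (fun i => (i : ℝ) ^ 2)| ≤ Q ^ 2 * LL μ (fun _ => 1) := by
  apply LL_abs_le
  intro i hi
  have h1 := (abs_le_jap i).trans ((jap_le_PP μ i hi).trans h)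
  rw [abs_pow]
  exact pow_le_pow_left₀ (abs_nonneg _) h1 2

lemma rem_lin (μ : ℤ →₀ ℕ) (Q : ℝ) (h : PP μ ≤ Q) :
    |LL μ (fun i => (i : ℝ))| ≤ Q * LL μ (fun _ => 1) := by
  apply LL_abs_le
  intro i hi
  exact (abs_le_jap i).trans ((jap_le_PP μ i hi).trans h)

lemma omega_diff (ω : ℤ → ℝ) (hω : ∀ j : ℤ, |ω j - (j : ℝ) ^ 2| ≤ 1 / 2) (μ : ℤ →₀ ℕ) :
    |LL μ ω - LL μ (fun i => (i : ℝ) ^ 2)| ≤ 1 / 2 * LL μ (fun _ => 1) := by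
  have : LL μ ω - LL μ (fun i => (i : ℝ) ^ 2) = LL μ (fun i => ω i - (i : ℝ) ^ 2) := by
    unfold LL Finsupp.sum
    rw [← Finset.sum_sub_distrib]
    exact Finset.sum_congr rfl fun i _ => by ring
  rw [this]
  exact LL_abs_le _ _ _ fun i _ => hω i

lemma poly_case (A B Q R : ℝ) (hA : 1 ≤ A) (hB : 1 ≤ B) (hQ : 1 ≤ Q) (hR : 2 ≤ R)
    (h1 : A ≤ R * B) (h2 : A ≤ 2 * R * Q ^ 2) :
    8 * R ^ 6 * (A * B * Q) ^ 3 * A ^ 30 ≤ 2 ^ 54 * R ^ 45 * (A * B * Q) ^ 15 := by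
  have h3 : A ^ 18 ≤ (R * B) ^ 12 * (2 * R * Q ^ 2) ^ 6 := by
    calc A ^ 18 = A ^ 12 * A ^ 6 := by ring
      _ ≤ _ := by gcongr
  calc 8 * R ^ 6 * (A * B * Q) ^ 3 * A ^ 30
      = 8 * R ^ 6 * (A * B * Q) ^ 3 * A ^ 12 * A ^ 18 := by ring
    _ ≤ 8 * R ^ 6 * (A * B * Q) ^ 3 * A ^ 12 * ((R * B) ^ 12 * (2 * R * Q ^ 2) ^ 6) := by gcongr
    _ = 2 ^ 9 * R ^ 24 * (A * B * Q) ^ 15 := by ring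
    _ ≤ 2 ^ 54 * R ^ 45 * (A * B * Q) ^ 15 := by
        gcongr <;> first | linarith | norm_num

lemma poly_case2 (A Q R : ℝ) (hA : 1 ≤ A) (hQ : 1 ≤ Q) (hR : 2 ≤ R) :
    8 * R ^ 6 * Q ^ 3 * A ^ 30 ≤ 2 ^ 54 * R ^ 45 * (A * A * Q) ^ 15 := by
  calc 8 * R ^ 6 * Q ^ 3 * A ^ 30 ≤ 2 ^ 54 * R ^ 45 * Q ^ 15 * A ^ 30 := by
        gcongr <;> first | linarith | norm_num
    _ = _ := by ring

lemma rem_sum_le (Q x y N : ℝ) (h : x + y ≤ N) : Q ^ 2 * x + Q ^ 2 * y ≤ N * Q ^ 2 := by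
  nlinarith [mul_le_mul_of_nonneg_left h (sq_nonneg Q)]

set_option maxHeartbeats 1000000 in
lemma core (s γ : ℝ) (hs : 1 ≤ s) (hγ0 : 0 < γ) (hγ1 : γ ≤ 1) (ω : ℤ → ℝ)
    (hω : ∀ j : ℤ, |ω j - (j : ℝ) ^ 2| ≤ 1 / 2)
    (hdio : ∀ ℓ : ℤ →₀ ℤ, ℓ ≠ 0 →
      γ * ∏ n ∈ ℓ.support, (1 + (ℓ n : ℝ) ^ 2 * jap n ^ (2 * s))⁻¹ <
        |∑ n ∈ ℓ.support, ω n * (ℓ n : ℝ)|)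
    (α β : ℤ →₀ ℕ) (hne : α ≠ β)
    (N : ℕ) (hN : (N : ℝ) = LL α (fun _ => 1) + LL β (fun _ => 1)) (hN2 : 2 ≤ N)
    (hβ0 : β ≠ 0)
    (π : ℝ) (hπ : π = LL α (fun i => (i : ℝ)) - LL β (fun i => (i : ℝ)))
    (a : ℤ) (ha : a ∈ α.support) :
    γ * (jap a ^ 30) ^ s ≤ Real.exp (54 * s) * (((N : ℝ) + |π|) ^ 45) ^ s *
      |LL α ω - LL β ω| * ((PP α * PP β) ^ 15) ^ s := by
  have hN2' : (2 : ℝ) ≤ N := by exact_mod_cast hN2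
  set R : ℝ := (N : ℝ) + |π| with hRdef
  have hNR : (N : ℝ) ≤ R := by linarith [abs_nonneg π]
  have hR : 2 ≤ R := by linarith
  set D := |LL α ω - LL β ω| with hD
  have hD0 : 0 ≤ D := abs_nonneg _
  obtain ⟨α₁, hα₁⟩ := split_single α a ha
  have hA := one_le_jap a
  -- second largest index
  obtain ⟨b, hb, hbmax⟩ : ∃ b ∈ α₁.support ∪ β.support,
      ∀ i ∈ α₁.support ∪ β.support, jap i ≤ jap b := by
    apply Finset.exists_max_image
    obtain ⟨c, hc⟩ := Finsupp.support_nonempty_iff.mpr hβ0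
    exact ⟨c, Finset.mem_union_right _ hc⟩
  have hB := one_le_jap b
  -- momentum
  have hAB : jap a ≤ R * jap b := by
    apply jap_le_of_abs_le
    · nlinarith
    · have e1 := LL_abs_le α₁ (fun i => (i : ℝ)) (jap b)
        (fun i hi => (abs_le_jap i).trans (hbmax i (Finset.mem_union_left _ hi)))
      have e2 := LL_abs_le β (fun i => (i : ℝ)) (jap b)
        (fun i hi => (abs_le_jap i).trans (hbmax i (Finset.mem_union_right _ hi)))
      rw [hα₁, LL_add, LL_single] at hπ hN
      have e3 : (a : ℝ) = π - LL α₁ (fun i => (i : ℝ)) + LL β (fun i => (i : ℝ)) := by linarith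
      have e4 : |(a : ℝ)| ≤ |π| + |LL α₁ (fun i => (i : ℝ))| + |LL β (fun i => (i : ℝ))| := by
        rw [e3]
        exact (abs_add_le _ _).trans (by gcongr; exact abs_sub _ _)
      rw [hRdef, hN]
      nlinarith [abs_nonneg π]
  have hPα := one_le_PP α
  have hPβ := one_le_PP β
  have hPα₁ := one_le_PP α₁
  have hPPα : PP α = jap a * PP α₁ := by rw [hα₁, PP_add, PP_single]
  have hbP : jap b ≤ PP α₁ * PP β := by
    rcases Finset.mem_union.mp hb with h | h
    · have := jap_le_PP _ _ h
      nlinarith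
    · have := jap_le_PP _ _ h
      nlinarith
  have hY1 : 1 ≤ PP α * PP β := one_le_mul_of_one_le_of_one_le hPα hPβ
  -- large divisor
  by_cases hDbig : 1 ≤ D
  · refine finish s γ D R N 1 (PP α * PP β) (jap a) hs hD0 hR le_rfl hY1 hA (by linarith) hNR ?_ ?_
    · have : 1 ≤ (1 + (N : ℝ) ^ 2) ^ 3 := one_le_pow₀ (by nlinarith)
      simp only [one_pow, Real.one_rpow, mul_one]
      nlinarith
    · rw [hPPα, mul_assoc (jap a)]
      calc 8 * R ^ 6 * 1 ^ 3 * jap a ^ 30 = 8 * R ^ 6 * (jap a ^ 15 * jap a ^ 15) := by ring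
        _ ≤ 8 * R ^ 6 * (jap a ^ 15 * (R * (PP α₁ * PP β)) ^ 15) := by
            gcongr
            exact hAB.trans (by gcongr)
        _ = 8 * R ^ 21 * (jap a * (PP α₁ * PP β)) ^ 15 := by ring
        _ ≤ 2 ^ 54 * R ^ 45 * (jap a * (PP α₁ * PP β)) ^ 15 := by
            gcongr <;> first | linarith | norm_num
  push Not at hDbig
  -- the quadratic form is small
  have hquad : |LL α (fun i => (i : ℝ) ^ 2) - LL β (fun i => (i : ℝ) ^ 2)| ≤ N := by
    have e1 := abs_le.mp (omega_diff ω hω α)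
    have e2 := abs_le.mp (omega_diff ω hω β)
    have e3 := abs_lt.mp hDbig
    rw [abs_le]
    constructor <;> linarith
  have hdio0 := dio_bound s γ hs hγ0 ω hdio α β 0 α β (by simp) (by simp) hne N hN
  by_cases hbβ : b ∈ β.support
  · obtain ⟨β₁, hβ₁⟩ := split_single β b hbβ
    have hPβ₁ := one_le_PP β₁
    have hPPβ : PP β = jap b * PP β₁ := by rw [hβ₁, PP_add, PP_single]
    have hQ : 1 ≤ PP α₁ * PP β₁ := one_le_mul_of_one_le_of_one_le hPα₁ hPβ₁
    have hQα : PP α₁ ≤ PP α₁ * PP β₁ := by nlinarith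
    have hQβ : PP β₁ ≤ PP α₁ * PP β₁ := by nlinarith
    have hY : PP α * PP β = jap a * jap b * (PP α₁ * PP β₁) := by rw [hPPα, hPPβ]; ring
    by_cases hab : a = b
    · subst hab
      have hdio1 := dio_bound s γ hs hγ0 ω hdio α β _ α₁ β₁ hα₁ hβ₁ hne N hN
      refine finish s γ D R N _ (PP α * PP β) (jap a) hs hD0 hR hQ hY1 hA (by linarith) hNR hdio1 ?_
      rw [hY]
      exact poly_case2 _ _ _ hA hQ hR
    · refine finish s γ D R N _ (PP α * PP β) (jap a) hs hD0 hR hY1 hY1 hA (by linarith) hNR hdio0 ?_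
      rw [hY]
      apply poly_case _ _ _ _ hA hB hQ hR hAB
      set Q := PP α₁ * PP β₁
      have hQ2 : Q ≤ Q ^ 2 := le_self_pow₀ hQ (by norm_num)
      have f1 := abs_le.mp (rem_sq α₁ Q hQα)
      have f2 := abs_le.mp (rem_sq β₁ Q hQβ)
      have f3 := abs_le.mp (rem_lin α₁ Q hQα)
      have f4 := abs_le.mp (rem_lin β₁ Q hQβ)
      have g1 := LL_one_nonneg α₁
      have g2 := LL_one_nonneg β₁
      rw [hα₁, hβ₁, LL_add, LL_add, LL_single, LL_single] at hquad hπ hN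
      have hsum : Q ^ 2 * LL α₁ (fun _ => 1) + Q ^ 2 * LL β₁ (fun _ => 1) ≤ N * Q ^ 2 := by
        exact rem_sum_le _ _ _ _ (by linarith)
      have hlin : Q * LL α₁ (fun _ => 1) + Q * LL β₁ (fun _ => 1) ≤ N * Q ^ 2 := by
        refine le_trans (add_le_add ?_ ?_) hsum <;> gcongr
      have hRN : N * Q ^ 2 ≤ R * Q ^ 2 := by gcongr
      have hNQ : (N : ℝ) ≤ N * Q ^ 2 := le_mul_of_one_le_right (by linarith) (one_le_pow₀ hQ)
      apply jap_le_of_abs_le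
      · linarith
      by_cases hab' : a = -b
      · have hbr : (b : ℝ) = -(a : ℝ) := by rw [hab']; push_cast; ring
        have hpq : |π| ≤ |π| * Q ^ 2 := le_mul_of_one_le_right (abs_nonneg _) (one_le_pow₀ hQ)
        have hRQ : R * Q ^ 2 = N * Q ^ 2 + |π| * Q ^ 2 := by rw [hRdef]; ring
        have := le_abs_self π
        have := neg_abs_le π
        rw [hbr] at hπ
        rw [abs_le]
        constructor <;> linarith
      · refine (abs_le_diff_sq a b hab hab').trans ?_
        have := abs_le.mp hquad
        rw [abs_le]
        constructor <;> linarith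
  · have hbα : b ∈ α₁.support := by
      rcases Finset.mem_union.mp hb with h | h
      · exact h
      · exact absurd h hbβ
    obtain ⟨α₂, hα₂⟩ := split_single α₁ b hbα
    have hPα₂ := one_le_PP α₂
    have hPPα₁ : PP α₁ = jap b * PP α₂ := by rw [hα₂, PP_add, PP_single]
    have hQ : 1 ≤ PP α₂ * PP β := one_le_mul_of_one_le_of_one_le hPα₂ hPβ
    have hQα : PP α₂ ≤ PP α₂ * PP β := by nlinarith
    have hQβ : PP β ≤ PP α₂ * PP β := by nlinarith
    have hY : PP α * PP β = jap a * jap b * (PP α₂ * PP β) := by rw [hPPα, hPPα₁]; ring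
    refine finish s γ D R N _ (PP α * PP β) (jap a) hs hD0 hR hY1 hY1 hA (by linarith) hNR hdio0 ?_
    rw [hY]
    apply poly_case _ _ _ _ hA hB hQ hR hAB
    set Q := PP α₂ * PP β
    have f1 := abs_le.mp (rem_sq α₂ Q hQα)
    have f2 := abs_le.mp (rem_sq β Q hQβ)
    have g1 := LL_one_nonneg α₂
    have g2 := LL_one_nonneg β
    rw [hα₁, hα₂, LL_add, LL_add, LL_single, LL_single] at hquad hN
    have hsum : Q ^ 2 * LL α₂ (fun _ => 1) + Q ^ 2 * LL β (fun _ => 1) ≤ N * Q ^ 2 := by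
      exact rem_sum_le _ _ _ _ (by linarith)
    have hRN : N * Q ^ 2 ≤ R * Q ^ 2 := by gcongr
    have hNQ : (N : ℝ) ≤ N * Q ^ 2 := le_mul_of_one_le_right (by linarith) (one_le_pow₀ hQ)
    apply jap_le_of_abs_le
    · linarith
    refine (abs_le_sq_int a).trans ?_
    have := abs_le.mp hquad
    have := sq_nonneg (b : ℝ)
    linarith

lemma LL_one_cast (μ : ℤ →₀ ℕ) : LL μ (fun _ => 1) = ((μ.sum fun _ n => n : ℕ) : ℝ) := by
  unfold LL Finsupp.sum
  push_cast
  exact Finset.sum_congr rfl fun i _ => by ring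


/-- (Homological-equation small-divisor estimate, Sobolev case.) Under the
Diophantine conditions on `ω`, with `τ := (15/2)(2+q)`, for all finitely supported
`α ≠ β : ℤ → ℕ` with equal total mass `≥ 1` and every `j` with `α_j + β_j ≥ 1`,
`γ⟨j⟩^{2τ} ≤ e^{27(2+q)}(N+|π|)^{3τ}|∑ ω_i(α_i−β_i)|∏_i ⟨i⟩^{τ(α_i+β_i)}`. -/
theorem sobolev_small_divisor_estimate
    (q γ : ℝ) (hq : 0 ≤ q) (hγ0 : 0 < γ) (hγ1 : γ ≤ 1)
    (ω : ℤ → ℝ)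
    (hω : ∀ j : ℤ, |ω j - (j : ℝ) ^ 2| * jap j ^ q ≤ 1 / 2)
    (hdio : ∀ ℓ : ℤ →₀ ℤ, ℓ ≠ 0 →
      γ * ∏ n ∈ ℓ.support, (1 + (ℓ n : ℝ) ^ 2 * jap n ^ (2 + q))⁻¹ <
        |∑ n ∈ ℓ.support, ω n * (ℓ n : ℝ)|)
    (α β : ℤ →₀ ℕ) (hne : α ≠ β)
    (hmass : (α.sum fun _ n => n) = β.sum fun _ n => n)
    (hmass1 : 1 ≤ α.sum fun _ n => n)
    (N : ℕ) (hN : N = (α.sum fun _ n => n) + β.sum fun _ n => n)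
    (π : ℝ)
    (hπ : π = ∑ i ∈ α.support ∪ β.support, (i : ℝ) * ((α i : ℝ) - (β i : ℝ)))
    (j : ℤ) (hj : 1 ≤ α j + β j) :
    γ * jap j ^ (2 * ((15 / 2) * (2 + q))) ≤
      Real.exp (27 * (2 + q)) * ((N : ℝ) + |π|) ^ (3 * ((15 / 2) * (2 + q))) *
        |∑ i ∈ α.support ∪ β.support, ω i * ((α i : ℝ) - (β i : ℝ))| *
        ∏ i ∈ α.support ∪ β.support,
          jap i ^ (((15 / 2) * (2 + q)) * ((α i : ℝ) + (β i : ℝ))) := by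
  
  have hs : (1 : ℝ) ≤ (2 + q) / 2 := by linarith
  obtain ⟨s, hsq⟩ : ∃ s : ℝ, s = (2 + q) / 2 := ⟨_, rfl⟩
  rw [← hsq] at hs
  have h2s : 2 + q = 2 * s := by linarith
  rw [h2s] at hdio
  have hω' : ∀ j : ℤ, |ω j - (j : ℝ) ^ 2| ≤ 1 / 2 := fun i => by
    have h1 : 1 ≤ jap i ^ q := Real.one_le_rpow (one_le_jap i) hq
    have h2 := hω i
    nlinarith [abs_nonneg (ω i - (i : ℝ) ^ 2)]
  have hN' : (N : ℝ) = LL α (fun _ => 1) + LL β (fun _ => 1) := by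
    rw [LL_one_cast, LL_one_cast, hN]; push_cast; rfl
  have hN2 : 2 ≤ N := by omega
  have hα0 : α ≠ 0 := by
    rintro rfl
    simp at hmass1
  have hβ0 : β ≠ 0 := by
    rintro rfl
    rw [hmass] at hmass1
    simp at hmass1
  rw [LL_union α β (fun i => (i : ℝ))] at hπ
  rw [LL_union, PP_union]
  have hP0 : 0 ≤ PP α * PP β :=
    mul_nonneg (by linarith [one_le_PP α]) (by linarith [one_le_PP β])
  have hR0 : 0 ≤ (N : ℝ) + |π| := by positivity
  have conv : ∀ (x : ℝ) (k : ℕ), 0 ≤ x → x ^ ((k : ℝ) * s) = (x ^ k) ^ s := fun x k hx => by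
    rw [Real.rpow_mul hx, Real.rpow_natCast]
  have t1 : 2 * ((15 / 2) * (2 + q)) = ((30 : ℕ) : ℝ) * s := by rw [h2s]; push_cast; ring
  have t2 : 3 * ((15 / 2) * (2 + q)) = ((45 : ℕ) : ℝ) * s := by rw [h2s]; push_cast; ring
  have t3 : (15 / 2) * (2 + q) = ((15 : ℕ) : ℝ) * s := by rw [h2s]; push_cast; ring
  have t4 : 27 * (2 + q) = 54 * s := by rw [h2s]; ring
  rw [t1, t2, t3, t4, conv _ _ (jap_pos j).le, conv _ _ hR0, conv _ _ hP0]
  by_cases hjα : j ∈ α.support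
  · exact core s γ hs hγ0 hγ1 ω hω' hdio α β hne N hN' hN2 hβ0 π hπ j hjα
  · have hjβ : j ∈ β.support := by
      have := Finsupp.notMem_support_iff.mp hjα
      rw [Finsupp.mem_support_iff]
      omega
    have := core s γ hs hγ0 hγ1 ω hω' hdio β α hne.symm N (by rw [hN', add_comm]) hN2 hα0 (-π)
      (by rw [hπ]; ring) j hjβ
    rwa [abs_neg, abs_sub_comm, mul_comm (PP β)] at this
end
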